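/- For any sequence k = k(n) of natural numbers with k(n) → ∞ as n → ∞, the pair sum over single-gap pairs sharing many edges vanishes: Σ_{s=k(n)}^{n−2} c_{s,1} → 0 as n → ∞. -/

import Mathlib

open MeasureTheory Filter

namespace RandomHypercube

/-- Index of a (potential) hypercube edge: the lower endpoint `A` together with the
direction `i` that is added, representing the edge from `A` to `A ∪ {i}`. -/
abbrev EdgeIdx (n : ℕ) := Finset (Fin n) × Fin n

/-- The sample space: an i.i.d. Uniform[0,1] weight for each edge index. -/
abbrev CubeOmega (n : ℕ) := EdgeIdx n → ℝ

/-- The product of uniform measures on [0,1], one for each edge. -/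
noncomputable def cubeMeasure (n : ℕ) : Measure (CubeOmega n) :=
  Measure.pi fun _ => (volume : Measure ℝ).restrict (Set.Icc 0 1)

/-- The vertex visited by the direct path associated to the permutation `σ`
just before taking its `j`-th step: the image under `σ` of `{0, …, j-1}`. -/
def initSeg (n : ℕ) (σ : Equiv.Perm (Fin n)) (j : Fin n) : Finset (Fin n) :=
  (Finset.univ.filter fun i => i < j).image σ

/-- The edge used in the `j`-th step of the direct path associated to `σ`. -/
def pathEdge (n : ℕ) (σ : Equiv.Perm (Fin n)) (j : Fin n) : EdgeIdx n :=
  (initSeg n σ j, σ j)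

/-- The direct path associated to `σ` is accessible if its successive edge
weights are strictly increasing. -/
def Accessible (n : ℕ) (σ : Equiv.Perm (Fin n)) (ω : CubeOmega n) : Prop :=
  StrictMono fun j : Fin n => ω (pathEdge n σ j)

/-- The number of accessible direct paths from `∅` to `[n]`. -/
noncomputable def X (n : ℕ) (ω : CubeOmega n) : ℕ :=
  Nat.card {σ : Equiv.Perm (Fin n) // Accessible n σ ω}


/-- The set of steps `j` at which the direct paths of `σ` and `σ'` use the same edge
(shared edges necessarily occur at the same level in both paths). -/
def sharedSteps (n : ℕ) (σ σ' : Equiv.Perm (Fin n)) : Finset (Fin n) :=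
  Finset.univ.filter fun j => pathEdge n σ j = pathEdge n σ' j

/-- Given the sorted list `l` of steps (levels) of the shared edges, the gap vector:
the number of edges before the first shared edge, strictly between consecutive shared
edges, and after the last shared edge. -/
def gapsOfList (n : ℕ) (l : List ℕ) : List ℕ :=
  List.zipWith (fun a b => b - a) (0 :: l.map (· + 1)) (l ++ [n])

/-- The gap vector of the direct path of `σ'` relative to that of `σ`. -/
def gapVector (n : ℕ) (σ σ' : Equiv.Perm (Fin n)) : List ℕ :=
  gapsOfList n (((sharedSteps n σ σ').sort (· ≤ ·)).map Fin.val)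

/-- The number of (nontrivial) gaps between the direct paths of `σ` and `σ'`:
the number of nonzero entries of the gap vector. -/
def numGaps (n : ℕ) (σ σ' : Equiv.Perm (Fin n)) : ℕ :=
  ((gapVector n σ σ').filter (· != 0)).length

/-- The probability that the direct paths of `σ` and `σ'` are both accessible. -/
noncomputable def pairProb (n : ℕ) (σ σ' : Equiv.Perm (Fin n)) : ℝ :=
  (cubeMeasure n {ω | Accessible n σ ω ∧ Accessible n σ' ω}).toReal

/-- `c n s g`: the sum, over all ordered pairs of direct paths sharing exactly `s`
edges with `g` gaps, of the probability that both paths are accessible. -/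
noncomputable def c (n s g : ℕ) : ℝ :=
  ∑ p ∈ Finset.univ.filter
      (fun p : Equiv.Perm (Fin n) × Equiv.Perm (Fin n) =>
        (sharedSteps n p.1 p.2).card = s ∧ numGaps n p.1 p.2 = g),
    pairProb n p.1 p.2

/-- `w m`: the number of direct paths from `∅` to `[m]` in the `m`-dimensional hypercube
that are edge-disjoint from the canonical path (the identity permutation). -/
noncomputable def w (m : ℕ) : ℕ :=
  Nat.card {σ : Equiv.Perm (Fin m) // sharedSteps m σ 1 = ∅}

end RandomHypercube

/-!
Suppose two paths share `s` of their `n = s + m` edges and the unshared steps are consecutive. By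
exchangeability, the probability that both paths are accessible is the number of linear extensions
of the union of the two chains of edges, divided by `(n + m)!`. The shared edges, fixed by their
positions outside the gap, leave only `2 * m` ranks for the two segments inside it, so there are at
most `(2 * m).choose m` extensions. Since there are at most `n! * (s + 1) * m!` such pairs of paths,
`c n s 1 ≤ (s + 1) * (2 * m).choose m / (n + m).choose m`. This ratio of binomials can be written
both as a product of `m` and as a product of `s` fractions; using the shorter of the two, all but
at most two of them are at most `2 / 3`. The resulting bound is the term at `s` of a convergent
series plus `1 / (n + 1)` times the term at `m - 2` of the same series.
-/

open scoped Finset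

namespace RandomHypercube

section OrderingProbability

variable {P : Type*} [Fintype P]

lemma measurePreserving_comp_of_injective {ι κ α : Type*} [Fintype ι] [Fintype κ]
    [MeasurableSpace α] (μ : Measure α) [IsProbabilityMeasure μ] {e : κ → ι}
    (he : Function.Injective e) :
    MeasurePreserving (fun ω : ι → α => ω ∘ e) (Measure.pi fun _ => μ) (Measure.pi fun _ => μ) := by
  have hindep : ProbabilityTheory.iIndepFun (fun k (ω : ι → α) => ω (e k))
      (Measure.pi fun _ => μ) :=
    (ProbabilityTheory.iIndepFun_pi (X := fun _ => id) fun _ => aemeasurable_id).precomp he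
  refine ⟨by fun_prop, ?_⟩
  calc Measure.map (fun ω k => ω (e k)) (Measure.pi fun _ => μ)
      = Measure.pi fun k => Measure.map (Function.eval (e k)) (Measure.pi fun _ => μ) :=
        (ProbabilityTheory.iIndepFun_iff_map_fun_eq_pi_map fun _ =>
          (measurable_pi_apply _).aemeasurable).1 hindep
    _ = Measure.pi fun _ => μ := by
        simp only [(measurePreserving_eval (fun _ => μ) _).map_eq]

open scoped Classical in
lemma factorial_card_mul_measure_pi_le {α : Type*} [MeasurableSpace α] (μ : Measure α)
    [IsProbabilityMeasure μ] {R : Set (P → α)} (hR : MeasurableSet R) {B : ℕ}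
    (hB : ∀ x : P → α, #{τ : Equiv.Perm P | x ∘ τ ∈ R} ≤ B) :
    ((Fintype.card P).factorial : ENNReal) * Measure.pi (fun _ => μ) R ≤ B := by
  have hperm (τ : Equiv.Perm P) :
      MeasurePreserving (fun x : P → α => x ∘ τ) (Measure.pi fun _ => μ) (Measure.pi fun _ => μ) :=
    measurePreserving_comp_of_injective μ τ.injective
  have hmeas (τ : Equiv.Perm P) : MeasurableSet {x : P → α | x ∘ τ ∈ R} :=
    (hperm τ).measurable hR
  calc ((Fintype.card P).factorial : ENNReal) * Measure.pi (fun _ => μ) R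
      = ∑ τ : Equiv.Perm P, Measure.pi (fun _ => μ) {x | x ∘ τ ∈ R} := by
        have hconst (τ : Equiv.Perm P) :
            Measure.pi (fun _ => μ) {x : P → α | x ∘ τ ∈ R} = Measure.pi (fun _ => μ) R :=
          (hperm τ).measure_preimage hR.nullMeasurableSet
        simp only [hconst, Finset.sum_const, Finset.card_univ, Fintype.card_perm, nsmul_eq_mul]
    _ = ∫⁻ x, ∑ τ : Equiv.Perm P, Set.indicator {x | x ∘ τ ∈ R} 1 x ∂Measure.pi fun _ => μ := by
        rw [lintegral_finsetSum _ fun τ _ => measurable_one.indicator (hmeas τ)]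
        simp only [lintegral_indicator_one (hmeas _)]
    _ ≤ ∫⁻ _, B ∂Measure.pi fun _ : P => μ := by
        refine lintegral_mono fun x => ?_
        simp only [Set.indicator_apply, Set.mem_ofPred_eq, Pi.one_apply, Finset.sum_boole]
        exact_mod_cast hB x
    _ = B := by simp

open scoped Classical in
/-- The linear extensions of a relation `r` on a finite type, encoded as the bijective rankings
that increase along `r`. -/
noncomputable def linearExtensions (r : P → P → Prop) : Finset (P ≃ Fin (Fintype.card P)) :=
  {ρ | ∀ p q, r p q → ρ p < ρ q}

lemma mem_linearExtensions {r : P → P → Prop} {ρ : P ≃ Fin (Fintype.card P)} :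
    ρ ∈ linearExtensions r ↔ ∀ p q, r p q → ρ p < ρ q := by
  simp [linearExtensions]

lemma exists_ranking {α : Type*} [LinearOrder α] (x : P → α) :
    ∃ ρ : P ≃ Fin (Fintype.card P), ∀ p q, x p < x q → ρ p < ρ q := by
  let φ := Fintype.equivFin P
  refine ⟨φ.trans (Tuple.sort (x ∘ φ.symm)).symm, fun p q hpq => ?_⟩
  by_contra! hle
  have hx : x q ≤ x p := by simpa using Tuple.monotone_sort (x ∘ φ.symm) hle
  exact hx.not_gt hpq

open scoped Classical in
lemma card_perm_forall_rel_lt_le {α : Type*} [LinearOrder α] (r : P → P → Prop) (x : P → α) :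
    #{τ : Equiv.Perm P | ∀ p q, r p q → x (τ p) < x (τ q)} ≤ #(linearExtensions r) := by
  obtain ⟨ρ, hρ⟩ := exists_ranking x
  refine Finset.card_le_card_of_injOn (fun τ => τ.trans ρ) (fun τ hτ => ?_) fun τ _ τ' _ h =>
    Equiv.ext fun p => ρ.injective (Equiv.congr_fun h p)
  rw [Finset.coe_filter_univ] at hτ
  exact mem_linearExtensions.2 fun p q hpq => hρ _ _ (hτ p q hpq)

-- This is not an equality in general because ties have positive probability when `μ` has atoms.
lemma measure_forall_rel_lt_le {ι : Type*} [Fintype ι] (μ : Measure ℝ) [IsProbabilityMeasure μ]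
    {e : P → ι} (he : Function.Injective e) (r : P → P → Prop) :
    (Measure.pi (fun _ => μ) {ω : ι → ℝ | ∀ p q, r p q → ω (e p) < ω (e q)}).toReal ≤
      #(linearExtensions r) / (Fintype.card P).factorial := by
  have hR : MeasurableSet {x : P → ℝ | ∀ p q, r p q → x p < x q} := by
    simp only [Set.ofPred_forall]
    exact .iInter fun p => .iInter fun q => .iInter fun _ =>
      measurableSet_lt (measurable_pi_apply p) (measurable_pi_apply q)
  have hle := factorial_card_mul_measure_pi_le μ hR fun x => by
    convert card_perm_forall_rel_lt_le r x
    rfl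
  rw [← (measurePreserving_comp_of_injective μ he).measure_preimage hR.nullMeasurableSet] at hle
  rw [le_div_iff₀' (by positivity)]
  simpa using ENNReal.toReal_mono (ENNReal.natCast_ne_top _) hle

end OrderingProbability

section TwoChains

/-- The relation placing `f i` before `f j` and `g i` before `g j` whenever `i < j`, i.e. the order
constraints imposed by two chains which may have elements in common. -/
def twoChains {I P : Type*} [LT I] (f g : I → P) (p q : P) : Prop :=
  Relation.Map (· < ·) f f p q ∨ Relation.Map (· < ·) g g p q

lemma forall_twoChains_iff {I P α : Type*} [Preorder I] [Preorder α] {f g : I → P} {x : P → α} :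
    (∀ p q, twoChains f g p q → x p < x q) ↔ StrictMono (x ∘ f) ∧ StrictMono (x ∘ g) := by
  constructor
  · exact fun h => ⟨fun i j hij => h _ _ (.inl ⟨i, j, hij, rfl, rfl⟩),
      fun i j hij => h _ _ (.inr ⟨i, j, hij, rfl, rfl⟩)⟩
  · rintro ⟨hf, hg⟩ p q (⟨i, j, hij, rfl, rfl⟩ | ⟨i, j, hij, rfl, rfl⟩)
    exacts [hf hij, hg hij]

variable {n N : ℕ}

lemma val_le_of_strictMono {f : Fin n → Fin N} (hf : StrictMono f) (j : Fin n) :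
    (j : ℕ) ≤ f j := by
  have := Finset.card_le_card_of_injOn f (s := Finset.Iio j) (t := Finset.Iio (f j))
    (fun i hi => by simpa using hf (by simpa using hi)) hf.injective.injOn
  simpa using this

lemma val_add_le_of_strictMono {f : Fin n → Fin N} (hf : StrictMono f) (j : Fin n) :
    (f j : ℕ) + n ≤ j + N := by
  have := Finset.card_le_card_of_injOn f (s := Finset.Ioi j) (t := Finset.Ioi (f j))
    (fun i hi => by simpa using hf (by simpa using hi)) hf.injective.injOn
  simp only [Fin.card_Ioi] at this
  omega

lemma ncard_eq_of_image_val_eq_Ico {s : Set (Fin n)} {a m : ℕ}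
    (h : Fin.val '' s = Set.Ico a (a + m)) : s.ncard = m := by
  rw [← Set.ncard_image_of_injective _ Fin.val_injective, h, ← Finset.coe_Ico,
    Set.ncard_coe_finset, Nat.card_Ico, Nat.add_sub_cancel_left]

variable {P : Type*} {f g : Fin n → P}

lemma range_eq_compl_image_unshared (hlevel : ∀ i j, f i = g j → i = j)
    (hcover : ∀ p, p ∈ Set.range f ∪ Set.range g) :
    Set.range f = (g '' {j | f j ≠ g j})ᶜ := by
  ext p
  constructor
  · rintro ⟨i, rfl⟩ ⟨j, hj, hji⟩
    exact hj (hlevel i j hji.symm ▸ hji.symm)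
  · intro hp
    rcases hcover p with hp' | ⟨j, rfl⟩
    · exact hp'
    · exact ⟨j, by_contra fun hj => hp ⟨j, hj, rfl⟩⟩

lemma card_eq_add_ncard_unshared [Fintype P] (hf : f.Injective) (hg : g.Injective)
    (hlevel : ∀ i j, f i = g j → i = j) (hcover : ∀ p, p ∈ Set.range f ∪ Set.range g) :
    Fintype.card P = n + {j | f j ≠ g j}.ncard := by
  have hcompl := Set.ncard_add_ncard_compl (g '' {j | f j ≠ g j})
  rw [← range_eq_compl_image_unshared hlevel hcover, Set.ncard_image_of_injective _ hg,
    ← Set.image_univ, Set.ncard_image_of_injective _ hf, Set.ncard_univ, Nat.card_fin,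
    Nat.card_eq_fintype_card] at hcompl
  rw [← hcompl, add_comm]

lemma equiv_eq_of_image_unshared_eq (hlevel : ∀ i j, f i = g j → i = j)
    (hcover : ∀ p, p ∈ Set.range f ∪ Set.range g) {ρ ρ' : P ≃ Fin N}
    (hf : StrictMono (ρ ∘ f)) (hg : StrictMono (ρ ∘ g))
    (hf' : StrictMono (ρ' ∘ f)) (hg' : StrictMono (ρ' ∘ g))
    (himage : ρ ∘ g '' {j | f j ≠ g j} = ρ' ∘ g '' {j | f j ≠ g j}) : ρ = ρ' := by
  have range_f (π : P ≃ Fin N) : Set.range (π ∘ f) = (π ∘ g '' {j | f j ≠ g j})ᶜ := by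
    rw [Set.range_comp, range_eq_compl_image_unshared hlevel hcover,
      Set.image_compl_eq π.bijective, Set.image_comp]
  have eq_f : ρ ∘ f = ρ' ∘ f := (hf.range_inj hf').1 (by rw [range_f, range_f, himage])
  have eq_g : {j | f j ≠ g j}.domRestrict (ρ ∘ g) = {j | f j ≠ g j}.domRestrict (ρ' ∘ g) := by
    have strictMono_restrict {π : P ≃ Fin N} (h : StrictMono (π ∘ g)) :
        StrictMono ({j | f j ≠ g j}.domRestrict (π ∘ g)) := fun _ _ hij => h hij
    rw [← (strictMono_restrict hg).range_inj (strictMono_restrict hg'), Set.range_domRestrict,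
      Set.range_domRestrict, himage]
  ext p : 1
  rcases hcover p with ⟨i, rfl⟩ | ⟨j, rfl⟩
  · exact congrFun eq_f i
  · by_cases hj : f j = g j
    · exact hj ▸ congrFun eq_f j
    · exact congrFun eq_g ⟨j, hj⟩

-- There are `n + m` ranks, so the `j`-th element of a chain has rank between `j` and `j + m`. Thus
-- the unshared elements of the second chain take `m` of the ranks in `Ico a (a + 2 * m)`, and this
-- set of `m` ranks determines the extension.
lemma card_linearExtensions_twoChains_le [Fintype P] (hf : f.Injective) (hg : g.Injective)
    (hlevel : ∀ i j, f i = g j → i = j) (hcover : ∀ p, p ∈ Set.range f ∪ Set.range g) {a m : ℕ}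
    (hgap : Fin.val '' {j | f j ≠ g j} = Set.Ico a (a + m)) :
    #(linearExtensions (twoChains f g)) ≤ m.centralBinom := by
  classical
  have hgap_card : {j | f j ≠ g j}.ncard = m := ncard_eq_of_image_val_eq_Ico hgap
  have hcard : Fintype.card P = n + m :=
    hgap_card ▸ card_eq_add_ncard_unshared hf hg hlevel hcover
  let unsharedRanks (ρ : P ≃ Fin (Fintype.card P)) : Finset ℕ :=
    ({j | f j ≠ g j} : Finset (Fin n)).image fun j => (ρ (g j) : ℕ)
  have hmaps : ∀ ρ ∈ linearExtensions (twoChains f g),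
      unsharedRanks ρ ∈ (Finset.Ico a (a + 2 * m)).powersetCard m := by
    intro ρ hρ
    have hmono := (forall_twoChains_iff.1 (mem_linearExtensions.1 hρ)).2
    refine Finset.mem_powersetCard.2 ⟨Finset.image_subset_iff.2 fun j hj => ?_, ?_⟩
    · have hj_gap : (j : ℕ) ∈ Set.Ico a (a + m) := hgap ▸ Set.mem_image_of_mem _ (by simpa using hj)
      have hlower : (j : ℕ) ≤ ρ (g j) := val_le_of_strictMono hmono j
      have hupper : (ρ (g j) : ℕ) + n ≤ j + Fintype.card P := val_add_le_of_strictMono hmono j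
      rw [Set.mem_Ico] at hj_gap
      rw [Finset.mem_Ico]
      omega
    · have hinj : (fun j => (ρ (g j) : ℕ)).Injective := Fin.val_injective.comp hmono.injective
      rw [Finset.card_image_of_injective _ hinj, ← hgap_card, ← Set.ncard_coe_finset,
        Finset.coe_filter_univ]
  have hinj : Set.InjOn unsharedRanks (linearExtensions (twoChains f g)) := by
    intro ρ hρ ρ' hρ' himage
    obtain ⟨hf, hg⟩ := forall_twoChains_iff.1 (mem_linearExtensions.1 hρ)
    obtain ⟨hf', hg'⟩ := forall_twoChains_iff.1 (mem_linearExtensions.1 hρ')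
    refine equiv_eq_of_image_unshared_eq hlevel hcover hf hg hf' hg'
      (Fin.val_injective.image_injective ?_)
    simpa only [unsharedRanks, Finset.coe_image, Finset.coe_filter_univ, Set.image_image,
      Function.comp_apply] using congrArg SetLike.coe himage
  calc #(linearExtensions (twoChains f g))
      ≤ #((Finset.Ico a (a + 2 * m)).powersetCard m) :=
        Finset.card_le_card_of_injOn unsharedRanks hmaps hinj
    _ = m.centralBinom := by
        rw [Finset.card_powersetCard, Nat.card_Ico, Nat.add_sub_cancel_left,
          Nat.centralBinom_eq_two_mul_choose]

lemma measure_strictMono_pair_le {ι : Type*} [Fintype ι] (μ : Measure ℝ) [IsProbabilityMeasure μ]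
    {f g : Fin n → ι} (hf : f.Injective) (hg : g.Injective) (hlevel : ∀ i j, f i = g j → i = j)
    {a m : ℕ} (hgap : Fin.val '' {j | f j ≠ g j} = Set.Ico a (a + m)) :
    (Measure.pi (fun _ => μ) {ω : ι → ℝ | StrictMono (ω ∘ f) ∧ StrictMono (ω ∘ g)}).toReal ≤
      m.centralBinom / (n + m).factorial := by
  classical
  let P := ↥(Set.range f ∪ Set.range g)
  let f' : Fin n → P := fun j => ⟨f j, .inl ⟨j, rfl⟩⟩
  let g' : Fin n → P := fun j => ⟨g j, .inr ⟨j, rfl⟩⟩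
  have hf' : f'.Injective := fun i j h => hf (congrArg Subtype.val h)
  have hg' : g'.Injective := fun i j h => hg (congrArg Subtype.val h)
  have hlevel' (i j) (h : f' i = g' j) : i = j := hlevel i j (congrArg Subtype.val h)
  have hcover (p : P) : p ∈ Set.range f' ∪ Set.range g' :=
    p.2.imp (fun ⟨i, hi⟩ => ⟨i, Subtype.ext hi⟩) fun ⟨j, hj⟩ => ⟨j, Subtype.ext hj⟩
  have hgap' : Fin.val '' {j | f' j ≠ g' j} = Set.Ico a (a + m) := by
    rw [← hgap]
    exact congrArg _ (Set.ext fun j => Subtype.ext_iff.not)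
  have hcard : Fintype.card P = n + m :=
    ncard_eq_of_image_val_eq_Ico hgap' ▸ card_eq_add_ncard_unshared hf' hg' hlevel' hcover
  have hset : {ω : ι → ℝ | StrictMono (ω ∘ f) ∧ StrictMono (ω ∘ g)} =
      {ω | ∀ p q, twoChains f' g' p q → ω p < ω q} :=
    Set.ext fun ω => (forall_twoChains_iff (f := f') (g := g') (x := fun p => ω p)).symm
  rw [hset, ← hcard]
  refine (measure_forall_rel_lt_le μ Subtype.val_injective _).trans ?_
  gcongr
  exact card_linearExtensions_twoChains_le hf' hg' hlevel' hcover hgap'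

end TwoChains

section PairProbability

variable {n : ℕ} {σ σ' : Equiv.Perm (Fin n)}

lemma card_initSeg (σ : Equiv.Perm (Fin n)) (j : Fin n) : #(initSeg n σ j) = j := by
  rw [initSeg, Finset.card_image_of_injective _ σ.injective, Finset.filter_gt_eq_Iio, Fin.card_Iio]

lemma eq_of_pathEdge_eq {i j : Fin n} (h : pathEdge n σ i = pathEdge n σ' j) : i = j := by
  have hcard : #(initSeg n σ i) = #(initSeg n σ' j) := congrArg (fun e => #e.1) h
  rw [card_initSeg, card_initSeg] at hcard
  exact Fin.ext hcard

lemma pairProb_le {a m : ℕ}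
    (hgap : (sharedSteps n σ σ')ᶜ.map Fin.valEmbedding = Finset.Ico a (a + m)) :
    pairProb n σ σ' ≤ m.centralBinom / (n + m).factorial := by
  have : IsProbabilityMeasure ((volume : Measure ℝ).restrict (Set.Icc 0 1)) := ⟨by simp⟩
  refine measure_strictMono_pair_le _ (fun i j => eq_of_pathEdge_eq) (fun i j => eq_of_pathEdge_eq)
    (fun i j => eq_of_pathEdge_eq) (a := a) ?_
  rw [← Finset.coe_Ico, ← hgap, Finset.coe_map, sharedSteps, Finset.compl_filter,
    Finset.coe_filter_univ]
  rfl

end PairProbability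

section Gaps

/-- The gap vector of the increasing list of shared steps `l`, when steps are counted from `t`
instead of `0`; this is the form in which `gapsOfList` satisfies a recursion. -/
def gapsFrom (t n : ℕ) (l : List ℕ) : List ℕ :=
  List.zipWith (fun a b => b - a) (t :: l.map (· + 1)) (l ++ [n])

lemma gapsFrom_cons (t n x : ℕ) (l : List ℕ) :
    gapsFrom t n (x :: l) = (x - t) :: gapsFrom (x + 1) n l :=
  rfl

lemma Ico_subset_of_gapsFrom_eq_zero {t n : ℕ} {l : List ℕ} (h : ∀ d ∈ gapsFrom t n l, d = 0) :
    Finset.Ico t n ⊆ l.toFinset := by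
  induction l generalizing t with
  | nil => simpa [gapsFrom, Nat.sub_eq_zero_iff_le] using h
  | cons x l ih =>
    rw [gapsFrom_cons, List.forall_mem_cons] at h
    intro y hy
    have hrec : x + 1 ≤ y → y ∈ l.toFinset := fun hxy =>
      ih h.2 (Finset.mem_Ico.2 ⟨hxy, (Finset.mem_Ico.1 hy).2⟩)
    rw [Finset.mem_Ico] at hy
    rw [List.toFinset_cons, Finset.mem_insert]
    by_cases hyx : y = x
    · exact .inl hyx
    · exact .inr (hrec (by omega))

lemma exists_Ico_sdiff_eq_Ico {t n : ℕ} {l : List ℕ} (hl : l.Pairwise (· < ·))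
    (ht : ∀ x ∈ l, t ≤ x) (h : ((gapsFrom t n l).filter (· != 0)).length ≤ 1) :
    ∃ a b, Finset.Ico t n \ l.toFinset = Finset.Ico a b := by
  induction l generalizing t with
  | nil => exact ⟨t, n, by simp⟩
  | cons x l ih =>
    rw [List.pairwise_cons] at hl
    rw [List.forall_mem_cons] at ht
    rw [gapsFrom_cons, List.filter_cons] at h
    by_cases hx : x = t
    · subst hx
      obtain ⟨a, b, hab⟩ := ih hl.2 (fun y hy => hl.1 y hy) (by simpa using h)
      refine ⟨a, b, hab ▸ ?_⟩
      ext y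
      simp only [List.toFinset_cons, Finset.mem_sdiff, Finset.mem_Ico, Finset.mem_insert]
      grind
    · have hrest : ∀ d ∈ gapsFrom (x + 1) n l, d = 0 := by
        have : x - t ≠ 0 := by omega
        simpa [this, List.filter_eq_nil_iff] using h
      have hcover := Ico_subset_of_gapsFrom_eq_zero hrest
      refine ⟨t, min x n, ?_⟩
      ext y
      have hy := @hcover y
      have hxy := hl.1 y
      simp only [List.toFinset_cons, Finset.mem_sdiff, Finset.mem_Ico, Finset.mem_insert,
        List.mem_toFinset, lt_min_iff] at hy hxy ⊢
      grind

lemma exists_map_compl_sharedSteps_eq_Ico {n : ℕ} {σ σ' : Equiv.Perm (Fin n)}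
    (h : numGaps n σ σ' ≤ 1) :
    ∃ a b, (sharedSteps n σ σ')ᶜ.map Fin.valEmbedding = Finset.Ico a b := by
  obtain ⟨a, b, hab⟩ := exists_Ico_sdiff_eq_Ico (t := 0) (n := n)
    (l := ((sharedSteps n σ σ').sort (· ≤ ·)).map Fin.val)
    (List.pairwise_map.2 (Finset.sortedLT_sort _).pairwise) (by simp) h
  refine ⟨a, b, hab ▸ ?_⟩
  ext y
  simp only [Finset.mem_map, Finset.mem_compl, Fin.valEmbedding_apply, Finset.mem_sdiff,
    Finset.mem_Ico, List.mem_toFinset, List.mem_map, Finset.mem_sort]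
  constructor
  · rintro ⟨j, hj, rfl⟩
    exact ⟨⟨Nat.zero_le _, j.2⟩, fun ⟨i, hi, hij⟩ => hj (Fin.ext hij ▸ hi)⟩
  · rintro ⟨hy, hy'⟩
    exact ⟨⟨y, hy.2⟩, fun hj => hy' ⟨_, hj, rfl⟩, rfl⟩

lemma exists_map_compl_sharedSteps_eq_Ico_add {s m : ℕ} {σ σ' : Equiv.Perm (Fin (s + m))}
    (hs : #(sharedSteps (s + m) σ σ') = s) (hgaps : numGaps (s + m) σ σ' ≤ 1) :
    ∃ a ≤ s, (sharedSteps (s + m) σ σ')ᶜ.map Fin.valEmbedding = Finset.Ico a (a + m) := by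
  obtain ⟨a, b, hab⟩ := exists_map_compl_sharedSteps_eq_Ico hgaps
  have hcard : m = b - a := by
    simpa [Finset.card_compl, hs] using congrArg Finset.card hab
  rcases m.eq_zero_or_pos with rfl | hm
  · exact ⟨0, s.zero_le, by rw [hab, Finset.Ico_eq_empty_of_le (by omega)]; rfl⟩
  obtain ⟨j, -, hj⟩ := Finset.mem_map.1 (hab ▸ Finset.mem_Ico.2 (by omega) :
    b - 1 ∈ (sharedSteps (s + m) σ σ')ᶜ.map Fin.valEmbedding)
  have hb : b - 1 < s + m := hj ▸ j.2
  exact ⟨a, by omega, by rw [hab]; congr 1; omega⟩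

end Gaps

section Counting

lemma card_perm_eq_off {ι : Type*} [Fintype ι] [DecidableEq ι] (σ : Equiv.Perm ι) (t : Finset ι) :
    #{σ' : Equiv.Perm ι | ∀ j ∉ t, σ' j = σ j} = (#t).factorial := by
  rw [← Fintype.card_coe t, ← Fintype.card_perm,
    Fintype.card_congr (Equiv.Perm.subtypeEquivSubtypePerm (· ∈ t)), Fintype.card_subtype]
  refine Finset.card_equiv (Equiv.mulLeft σ⁻¹) fun σ' => ?_
  simp [Equiv.symm_apply_eq]

lemma card_filter_val_mem_Ico_le (n a m : ℕ) :
    #{j : Fin n | (j : ℕ) ∈ Finset.Ico a (a + m)} ≤ m := by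
  have := Finset.card_le_card_of_injOn (s := {j : Fin n | (j : ℕ) ∈ Finset.Ico a (a + m)})
    (t := Finset.Ico a (a + m)) Fin.val (fun j hj => by simpa using hj) Fin.val_injective.injOn
  simpa using this

lemma card_perm_one_gap_le {s m : ℕ} (σ : Equiv.Perm (Fin (s + m))) :
    #{σ' | #(sharedSteps (s + m) σ σ') = s ∧ numGaps (s + m) σ σ' = 1} ≤
      (s + 1) * m.factorial := by
  let gapAt (a : ℕ) : Finset (Fin (s + m)) := {j | (j : ℕ) ∈ Finset.Ico a (a + m)}
  calc #{σ' | #(sharedSteps (s + m) σ σ') = s ∧ numGaps (s + m) σ σ' = 1}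
      ≤ #((Finset.range (s + 1)).biUnion fun a =>
          {σ' : Equiv.Perm (Fin (s + m)) | ∀ j ∉ gapAt a, σ' j = σ j}) := by
        refine Finset.card_le_card fun σ' hσ' => ?_
        obtain ⟨hs, hgaps⟩ := (Finset.mem_filter.1 hσ').2
        obtain ⟨a, has, ha⟩ := exists_map_compl_sharedSteps_eq_Ico_add hs hgaps.le
        refine Finset.mem_biUnion.2 ⟨a, Finset.mem_range_succ_iff.2 has,
          Finset.mem_filter.2 ⟨Finset.mem_univ _, fun j hj => ?_⟩⟩
        have hj_shared : j ∈ sharedSteps (s + m) σ σ' := by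
          by_contra hj'
          have hj_gap : (j : ℕ) ∈ Finset.Ico a (a + m) :=
            ha ▸ Finset.mem_map_of_mem Fin.valEmbedding (Finset.mem_compl.2 hj')
          exact hj (Finset.mem_filter.2 ⟨Finset.mem_univ _, hj_gap⟩)
        exact congrArg Prod.snd (Finset.mem_filter.1 hj_shared).2.symm
    _ ≤ (s + 1) * m.factorial := by
        refine (Finset.card_biUnion_le_card_mul _ _ m.factorial fun a _ => ?_).trans_eq
          (by rw [Finset.card_range])
        convert (card_perm_eq_off σ (gapAt a)).trans_le
          (Nat.factorial_le (card_filter_val_mem_Ico_le _ a m))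

lemma card_one_gap_pairs_le (s m : ℕ) :
    #{p : Equiv.Perm (Fin (s + m)) × Equiv.Perm (Fin (s + m)) |
      #(sharedSteps (s + m) p.1 p.2) = s ∧ numGaps (s + m) p.1 p.2 = 1} ≤
      (s + m).factorial * ((s + 1) * m.factorial) := by
  calc _ = ∑ σ, #{σ' | #(sharedSteps (s + m) σ σ') = s ∧ numGaps (s + m) σ σ' = 1} := by
        simp only [Finset.card_filter, Fintype.sum_prod_type]
    _ ≤ ∑ _ : Equiv.Perm (Fin (s + m)), (s + 1) * m.factorial :=
        Finset.sum_le_sum fun σ _ => card_perm_one_gap_le σ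
    _ = (s + m).factorial * ((s + 1) * m.factorial) := by
        simp only [Finset.sum_const, Finset.card_univ, Fintype.card_perm, Fintype.card_fin,
          smul_eq_mul]

lemma c_nonneg (n s g : ℕ) : 0 ≤ c n s g :=
  Finset.sum_nonneg fun _ _ => ENNReal.toReal_nonneg

lemma c_one_le (s m : ℕ) :
    c (s + m) s 1 ≤ (s + 1) * (m.centralBinom / (s + m + m).choose m) := by
  calc c (s + m) s 1
      ≤ #{p : Equiv.Perm (Fin (s + m)) × Equiv.Perm (Fin (s + m)) |
          #(sharedSteps (s + m) p.1 p.2) = s ∧ numGaps (s + m) p.1 p.2 = 1} *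
          (m.centralBinom / (s + m + m).factorial : ℝ) := by
        rw [← nsmul_eq_mul]
        refine Finset.sum_le_card_nsmul _ _ _ fun p hp => ?_
        obtain ⟨hs, hgaps⟩ := (Finset.mem_filter.1 hp).2
        obtain ⟨a, -, ha⟩ := exists_map_compl_sharedSteps_eq_Ico_add hs hgaps.le
        exact pairProb_le ha
    _ ≤ ((s + m).factorial * ((s + 1) * m.factorial) : ℕ) *
          (m.centralBinom / (s + m + m).factorial : ℝ) := by
        gcongr
        exact card_one_gap_pairs_le s m
    _ = (s + 1) * (m.centralBinom / (s + m + m).choose m) := by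
        rw [← Nat.choose_symm_add, Nat.cast_add_choose]
        push_cast
        field_simp

end Counting

section Decay

lemma ascFactorial_le_pow_mul_ascFactorial {a b k : ℕ} {r : ℝ} (hr : 0 ≤ r)
    (h : ∀ i < k, (a + i : ℝ) ≤ r * (b + i)) :
    (a.ascFactorial k : ℝ) ≤ r ^ k * b.ascFactorial k := by
  induction k with
  | zero => simp
  | succ k ih =>
    calc (a.ascFactorial (k + 1) : ℝ) = (a + k) * a.ascFactorial k := by
          rw [Nat.ascFactorial_succ]; push_cast; rfl
      _ ≤ r * (b + k) * (r ^ k * b.ascFactorial k) :=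
          mul_le_mul (h k k.lt_succ_self) (ih fun i hi => h i (hi.trans k.lt_succ_self))
            (by positivity) (by positivity)
      _ = r ^ (k + 1) * b.ascFactorial (k + 1) := by
          rw [Nat.ascFactorial_succ]; push_cast; ring

lemma centralBinom_div_choose_eq_ascFactorial_div (s m : ℕ) :
    (m.centralBinom / (s + m + m).choose m : ℝ) =
      (m + 1).ascFactorial m / (s + m + 1).ascFactorial m := by
  rw [Nat.ascFactorial_eq_factorial_mul_choose, Nat.ascFactorial_eq_factorial_mul_choose,
    Nat.centralBinom_eq_two_mul_choose, two_mul, Nat.cast_mul, Nat.cast_mul,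
    mul_div_mul_left _ _ (by positivity)]

lemma centralBinom_div_choose_eq_ascFactorial_div' (s m : ℕ) :
    (m.centralBinom / (s + m + m).choose m : ℝ) =
      (m + 1).ascFactorial s / (2 * m + 1).ascFactorial s := by
  have hprod : (m + 1).ascFactorial m * (2 * m + 1).ascFactorial s =
      (m + 1).ascFactorial s * (s + m + 1).ascFactorial m := by
    rw [show 2 * m + 1 = m + 1 + m by ring, show s + m + 1 = m + 1 + s by ring,
      Nat.ascFactorial_mul_ascFactorial, Nat.ascFactorial_mul_ascFactorial, add_comm m s]
  rw [centralBinom_div_choose_eq_ascFactorial_div, div_eq_div_iff (by positivity) (by positivity)]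
  exact_mod_cast hprod

lemma centralBinom_div_choose_le_of_le {s m : ℕ} (h : s ≤ m) :
    (m.centralBinom / (s + m + m).choose m : ℝ) ≤ (2 / 3) ^ s := by
  rw [centralBinom_div_choose_eq_ascFactorial_div', div_le_iff₀ (by positivity)]
  refine ascFactorial_le_pow_mul_ascFactorial (by norm_num) fun i hi => ?_
  have : (i + 1 : ℝ) ≤ m := by exact_mod_cast hi.trans_le h
  push_cast
  linarith

lemma centralBinom_div_choose_le_of_ge {s j : ℕ} (h : j + 2 ≤ s) :
    ((j + 2).centralBinom / (s + (j + 2) + (j + 2)).choose (j + 2) : ℝ) ≤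
      (j + 3) * (j + 4) * (2 / 3) ^ j / ((s + j + 3) * (s + j + 4)) := by
  have split_two (n : ℕ) :
      ((n + 1).ascFactorial (j + 2) : ℝ) = (n + 1) * (n + 2) * (n + 3).ascFactorial j := by
    rw [add_comm j 2, ← Nat.ascFactorial_mul_ascFactorial]
    simp only [Nat.ascFactorial]
    push_cast
    ring
  have hdecay : ((j + 5).ascFactorial j : ℝ) ≤ (2 / 3) ^ j * (s + (j + 2) + 3).ascFactorial j := by
    refine ascFactorial_le_pow_mul_ascFactorial (by norm_num) fun i hi => ?_
    have hij : (i + 1 : ℝ) ≤ j := by exact_mod_cast hi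
    have hjs : (j + 2 : ℝ) ≤ s := by exact_mod_cast h
    push_cast
    linarith
  rw [centralBinom_div_choose_eq_ascFactorial_div, split_two, split_two,
    div_le_iff₀ (by positivity)]
  calc _ ≤ (((j + 2 : ℕ) : ℝ) + 1) * ((j + 2 : ℕ) + 2) *
          ((2 / 3) ^ j * (s + (j + 2) + 3).ascFactorial j) := by gcongr
    _ = _ := by
        push_cast
        field_simp
        ring

/-- The summable majorant, up to a factor `O(1 / n)`, of the contribution of the pairs with `j + 2`
unshared edges, and also of that of the pairs with `j` shared edges. -/
noncomputable def decay (j : ℕ) : ℝ := (j + 3) * (j + 4) * (2 / 3) ^ j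

lemma decay_nonneg (j : ℕ) : 0 ≤ decay j := by
  unfold decay
  positivity

lemma summable_decay : Summable decay := by
  have hpow (k : ℕ) : Summable fun j : ℕ => (j : ℝ) ^ k * (2 / 3 : ℝ) ^ j :=
    summable_pow_mul_geometric_of_norm_lt_one k (by norm_num)
  refine (((hpow 2).add ((hpow 1).mul_left 7)).add ((hpow 0).mul_left 12)).congr fun j => ?_
  unfold decay
  ring

lemma mul_centralBinom_div_choose_le (s j : ℕ) :
    (s + 1) * ((j + 2).centralBinom / (s + (j + 2) + (j + 2)).choose (j + 2) : ℝ) ≤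
      decay s + decay j / (s + j + 3) := by
  have hdecay : 0 ≤ decay j / (s + j + 3) := div_nonneg (decay_nonneg j) (by positivity)
  rcases le_total s (j + 2) with h | h
  · calc _ ≤ (s + 1) * (2 / 3 : ℝ) ^ s := by gcongr; exact centralBinom_div_choose_le_of_le h
      _ ≤ decay s := by
          unfold decay
          gcongr
          nlinarith
      _ ≤ _ := le_add_of_nonneg_right hdecay
  · calc _ ≤ (s + j + 4) * (decay j / ((s + j + 3) * (s + j + 4))) := by
          gcongr ?_ * ?_
          · linarith
          · exact centralBinom_div_choose_le_of_ge h
      _ = decay j / (s + j + 3) := by field_simp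
      _ ≤ _ := le_add_of_nonneg_left (decay_nonneg s)

end Decay

section Tails

lemma tendsto_sum_Icc_zero_of_summable {G ι : Type*} [AddCommGroup G] [TopologicalSpace G]
    [IsTopologicalAddGroup G] {f : ℕ → G} (hf : Summable f) {l : Filter ι} {a : ι → ℕ}
    (ha : Tendsto a l atTop) (b : ι → ℕ) :
    Tendsto (fun i => ∑ s ∈ Finset.Icc (a i) (b i), f s) l (nhds 0) := by
  refine fun e he => mem_map.2 ?_
  obtain ⟨t, ht⟩ := hf.vanishing he
  filter_upwards [ha.eventually_gt_atTop (t.sup id)] with i hi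
  refine ht _ (Finset.disjoint_left.2 fun s hs hst => ?_)
  exact (hi.trans_le (Finset.mem_Icc.1 hs).1).not_ge (Finset.le_sup (f := id) hst)

lemma sum_Icc_sub_le_tsum {f : ℕ → ℝ} (hf : Summable f) (hf0 : ∀ j, 0 ≤ f j) (a N : ℕ) :
    ∑ s ∈ Finset.Icc a N, f (N - s) ≤ ∑' j, f j :=
  calc ∑ s ∈ Finset.Icc a N, f (N - s) ≤ ∑ s ∈ Finset.range (N + 1), f (N - s) :=
        Finset.sum_le_sum_of_subset_of_nonneg
          (fun _ hs => Finset.mem_range_succ_iff.2 (Finset.mem_Icc.1 hs).2) fun _ _ _ => hf0 _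
    _ = ∑ j ∈ Finset.range (N + 1), f j := Finset.sum_flip f
    _ ≤ ∑' j, f j := hf.sum_le_tsum _ fun j _ => hf0 j

end Tails

lemma c_add_two_one_le {N s : ℕ} (hs : s ≤ N) :
    c (N + 2) s 1 ≤ decay s + decay (N - s) / (N + 3) := by
  obtain ⟨j, rfl⟩ := Nat.exists_eq_add_of_le hs
  rw [Nat.add_sub_cancel_left, Nat.cast_add]
  exact (c_one_le s (j + 2)).trans (mul_centralBinom_div_choose_le s j)

lemma sum_c_add_two_one_le (a N : ℕ) :
    ∑ s ∈ Finset.Icc a N, c (N + 2) s 1 ≤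
      ∑ s ∈ Finset.Icc a N, decay s + (∑' j, decay j) / (N + 3) :=
  calc ∑ s ∈ Finset.Icc a N, c (N + 2) s 1
      ≤ ∑ s ∈ Finset.Icc a N, (decay s + decay (N - s) / (N + 3)) :=
        Finset.sum_le_sum fun s hs => c_add_two_one_le (Finset.mem_Icc.1 hs).2
    _ ≤ ∑ s ∈ Finset.Icc a N, decay s + (∑' j, decay j) / (N + 3) := by
        rw [Finset.sum_add_distrib, ← Finset.sum_div]
        gcongr
        exact sum_Icc_sub_le_tsum summable_decay decay_nonneg a N

end RandomHypercube

open RandomHypercube in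
/-- For any sequence `k(n) → ∞`, the pair sum over single-gap pairs sharing at least
`k(n)` edges vanishes as `n → ∞`. -/
theorem sum_c_one_gap_many_shared_tendsto_zero (k : ℕ → ℕ)
    (hk : Tendsto k atTop atTop) :
    Tendsto (fun n : ℕ => ∑ s ∈ Finset.Icc (k n) (n - 2), c n s 1)
      atTop (nhds 0) := by
  rw [← tendsto_add_atTop_iff_nat 2]
  have htail : Tendsto (fun N => ∑ s ∈ Finset.Icc (k (N + 2)) N, decay s) atTop (nhds 0) :=
    tendsto_sum_Icc_zero_of_summable summable_decay (hk.comp (tendsto_add_atTop_nat 2)) _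
  have hfrac : Tendsto (fun N : ℕ => (∑' j, decay j) / (N + 3 : ℝ)) atTop (nhds 0) :=
    tendsto_const_nhds.div_atTop
      (tendsto_atTop_add_const_right _ _ tendsto_natCast_atTop_atTop)
  refine squeeze_zero (fun N => Finset.sum_nonneg fun s _ => c_nonneg _ s 1)
    (fun N => sum_c_add_two_one_le (k (N + 2)) N) ?_
  simpa using htail.add hfrac
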